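/- arXiv:1412.1959 — 3 statements merged into one kernel-verified Lean document; each statement's English description precedes it below -/
import Mathlib

section
/- Let 0 ≤ δ ≤ 1 and define f : [0,∞) × [0,∞) → ℝ by f(x,y) = √(1+x²)·√(1+y²) − δ(x+y). Then the minimum of f over [0,∞) × [0,∞) equals 1 − δ²; that is, f(x,y) ≥ 1 − δ² for all x,y ≥ 0, and this value is attained (namely at (x,y) = (δ,δ)). -/
/-- Lemma 2 of the paper: for `0 ≤ δ ≤ 1`, the function
`f(x,y) = √(1+x²)·√(1+y²) − δ(x+y)` on `[0,∞) × [0,∞)` has minimum `1 − δ²`,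
attained at `(δ, δ)`. -/
theorem stmt_0 (δ : ℝ) (hδ0 : 0 ≤ δ) (hδ1 : δ ≤ 1)
    (f : ℝ → ℝ → ℝ)
    (hf : ∀ x y : ℝ, f x y =
      Real.sqrt (1 + x ^ 2) * Real.sqrt (1 + y ^ 2) - δ * (x + y)) :
    (∀ x y : ℝ, 0 ≤ x → 0 ≤ y → 1 - δ ^ 2 ≤ f x y) ∧ f δ δ = 1 - δ ^ 2 := by
  constructor
  · intro x y hx hy
    rw [hf, ← Real.sqrt_mul (by positivity)]
    rcases le_total (x + y) 2 with h | h
    · have h1 : 1 + (x + y) ^ 2 / 4 ≤ Real.sqrt ((1 + x ^ 2) * (1 + y ^ 2)) := by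
        apply Real.le_sqrt_of_sq_le
        have a : 0 ≤ (x + y) ^ 2 / 4 - x * y := by nlinarith [sq_nonneg (x - y)]
        have b : 0 ≤ 2 - x * y - (x + y) ^ 2 / 4 := by nlinarith
        nlinarith [mul_nonneg a b]
      nlinarith [sq_nonneg ((x + y) / 2 - δ)]
    · have h1 : x + y ≤ Real.sqrt ((1 + x ^ 2) * (1 + y ^ 2)) := by
        apply Real.le_sqrt_of_sq_le
        nlinarith [sq_nonneg (1 - x * y)]
      nlinarith [mul_nonneg (sub_nonneg.2 hδ1) (by linarith : 0 ≤ x + y - (1 + δ))]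
  · rw [hf, Real.mul_self_sqrt (by positivity)]
    ring
end

section
/- Let E be a real normed vector space and R : E → E a bounded linear operator. Let M, C₁, C₂, C₃ ≥ 0, α > 0, Δt > 0, T > 0, and suppose ‖Rʲ‖ ≤ M for every integer j ≥ 0 (operator norm of the j-th iterate). Let n ≥ 1 be an integer with nΔt ≤ T, and let ξ₁, …, ξₙ, η₁, …, ηₙ ∈ E satisfy ‖ξ_j‖ ≤ C₁(Δt)^α for all 1 ≤ j ≤ n, ‖ξ_j − ξ_{j−1}‖ ≤ C₂(Δt)^{α+1} for all 2 ≤ j ≤ n, and ‖η_j‖ ≤ C₃(Δt)^{α+1} for all 1 ≤ j ≤ n. Define e₀ = 0 and e_j = R e_{j−1} + d_j for 1 ≤ j ≤ n, where d_j = (R − I)ξ_j + η_j and I is the identity operator. Then ‖e_n‖ ≤ ((M + 1)C₁ + M C₂ T + M C₃ T)·(Δt)^α. -/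
/-- Explicit-constant form of Lemma 1 of the paper (Hundsdorfer's lemma):
stability `‖Rʲ‖ ≤ M` plus the local-error decomposition `d_j = (R−I)ξ_j + η_j`
with `‖ξ_j‖ ≤ C₁Δtᵅ`, `‖ξ_j − ξ_{j−1}‖ ≤ C₂Δt^{α+1}`, `‖η_j‖ ≤ C₃Δt^{α+1}`
yields `‖e_n‖ ≤ ((M+1)C₁ + MC₂T + MC₃T)Δtᵅ` for `nΔt ≤ T`. -/
theorem stmt_15 (E : Type*) [NormedAddCommGroup E] [NormedSpace ℝ E]
    (R : E →L[ℝ] E) (M C₁ C₂ C₃ : ℝ) (hM : 0 ≤ M) (hC₁ : 0 ≤ C₁) (hC₂ : 0 ≤ C₂)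
    (hC₃ : 0 ≤ C₃) (α Δt T : ℝ) (hα : 0 < α) (hΔt : 0 < Δt) (hT : 0 < T)
    (hstab : ∀ j : ℕ, ‖R ^ j‖ ≤ M)
    (n : ℕ) (hn : 1 ≤ n) (hnT : n * Δt ≤ T)
    (ξ η : ℕ → E)
    (hξ : ∀ j, 1 ≤ j → j ≤ n → ‖ξ j‖ ≤ C₁ * Δt ^ α)
    (hξdiff : ∀ j, 2 ≤ j → j ≤ n → ‖ξ j - ξ (j - 1)‖ ≤ C₂ * Δt ^ (α + 1))
    (hη : ∀ j, 1 ≤ j → j ≤ n → ‖η j‖ ≤ C₃ * Δt ^ (α + 1))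
    (e : ℕ → E) (he0 : e 0 = 0)
    (herec : ∀ j, 1 ≤ j → j ≤ n →
      e j = R (e (j - 1)) + ((R - 1) (ξ j) + η j)) :
    ‖e n‖ ≤ ((M + 1) * C₁ + M * C₂ * T + M * C₃ * T) * Δt ^ α := by
  have hb : ∀ (k : ℕ) (x : E) (c : ℝ), ‖x‖ ≤ c → ‖(R ^ k) x‖ ≤ M * c := fun k x c hx =>
    ((R ^ k).le_opNorm x).trans (mul_le_mul (hstab k) hx (norm_nonneg _) hM)
  have hs : ∀ (k : ℕ) (x : E), (R ^ k) (R x) = (R ^ (k + 1)) x := fun k x => by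
    rw [pow_succ]; rfl
  have hD : 0 < Δt ^ (α + 1) := Real.rpow_pos_of_pos hΔt _
  have key : ∀ m : ℕ, m + 1 ≤ n → ∀ k : ℕ, ‖(R ^ k) (e (m + 1) + ξ (m + 1))‖ ≤
      M * (C₁ * Δt ^ α) + (m + 1 : ℕ) * (M * (C₂ * Δt ^ (α + 1)) + M * (C₃ * Δt ^ (α + 1))) := by
    intro m
    induction m with
    | zero =>
      intro hm k
      have h1 : e (0 + 1) + ξ (0 + 1) = R (ξ 1) + η 1 := by
        rw [herec (0 + 1) (by omega) hm]
        simp [he0]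
        abel
      rw [h1, map_add, hs]
      have a := hb (k + 1) _ _ (hξ 1 le_rfl hn)
      have b := hb k _ _ (hη 1 le_rfl hn)
      have c := norm_add_le ((R ^ (k + 1)) (ξ 1)) ((R ^ k) (η 1))
      have d : 0 ≤ M * (C₂ * Δt ^ (α + 1)) := by positivity
      simp only [Nat.cast_add, Nat.cast_one, Nat.cast_zero]
      linarith
    | succ m ih =>
      intro hm k
      have h1 : e (m + 1 + 1) + ξ (m + 1 + 1) = R (e (m + 1) + ξ (m + 1)) +
          R (ξ (m + 1 + 1) - ξ (m + 1)) + η (m + 1 + 1) := by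
        rw [herec (m + 1 + 1) (by omega) hm]
        simp
        abel
      rw [h1, map_add, map_add, hs, hs]
      have a := ih (by omega) (k + 1)
      have a' := hb (k + 1) _ _ (hξdiff (m + 1 + 1) (by omega) hm)
      have b := hb k _ _ (hη (m + 1 + 1) (by omega) hm)
      rw [Nat.add_sub_cancel] at a'
      refine (norm_add₃_le).trans ?_
      simp only [Nat.cast_add, Nat.cast_one] at a ⊢
      linarith
  obtain ⟨m, rfl⟩ : ∃ m, n = m + 1 := ⟨n - 1, by omega⟩
  have h := key m le_rfl 0
  have hx := hξ (m + 1) hn le_rfl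
  have ht := norm_sub_le (e (m + 1) + ξ (m + 1)) (ξ (m + 1))
  rw [add_sub_cancel_right] at ht
  rw [pow_zero, ContinuousLinearMap.one_apply, Real.rpow_add_one hΔt.ne'] at h
  have hA : 0 ≤ (M * C₂ + M * C₃) * Δt ^ α := by positivity
  have := mul_le_mul_of_nonneg_left hnT hA
  linarith
end

section
/- Let A₀, A₁, A₂ be m×m real matrices, Δt > 0 and θ a real number, and set Z_j = Δt·A_j (j = 0,1,2), Z = Z₀ + Z₁ + Z₂, Q_j = I − θZ_j (j = 1,2), and P = Q₁Q₂; assume Q₁ and Q₂ are invertible. Let u, u* ∈ ℝᵐ, let b₀, b₁, b₂, c₀, c₁, c₂ ∈ ℝᵐ (inhomogeneous source terms), and let ρ₀, ρ₁, ρ₂, ρ̂₀, ρ̃₀, ρ̃₁, ρ̃₂ ∈ ℝᵐ (perturbations). Suppose the vectors Y₀, Y₁, Y₂, Ŷ₀, Ỹ₀, Ỹ₁, Ỹ₂, v ∈ ℝᵐ satisfy Y₀ = u + Zu + Δt·b where b = b₀+b₁+b₂; Y_j = Y_{j−1} + θ(Z_jY_j + Δt·c_j − Z_ju − Δt·b_j)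 for j = 1,2; Ŷ₀ = Y₀ + θ(Z₀Y₂ + Δt·c₀ − Z₀u − Δt·b₀); Ỹ₀ = Ŷ₀ + (1/2 − θ)(ZY₂ + Δt·c − Zu − Δt·b) where c = c₀+c₁+c₂; Ỹ_j = Ỹ_{j−1} + θ(Z_jỸ_j + Δt·c_j − Z_ju − Δt·b_j) for j = 1,2; and v = Ỹ₂; and suppose Y₀*, Y₁*, Y₂*, Ŷ₀*, Ỹ₀*, Ỹ₁*, Ỹ₂*, v* ∈ ℝᵐ satisfy the same equations with u replaced by u*, each equation augmented by adding the corresponding perturbation (ρ₀ to the first, ρ_j to the equations for Y_j*, ρ̂₀ to the equation for Ŷ₀*, ρ̃₀ to the equation for Ỹ₀*, ρ̃_j to the equations for Ỹ_j*), and v* = Ỹ₂*. Then v* − v = R(u* − u) + d, where R = I + P⁻¹Z + P⁻¹(θZ₀ + (1/2 − θ)Z)P⁻¹Z and d = P⁻¹(θZ₀ + (1/2 − θ)Z)(P⁻¹ρ₀ + Q₂⁻¹Q₁⁻¹ρ₁ + Q₂⁻¹ρ₂) + P⁻¹(ρ₀ + ρ̂₀ + ρ̃₀) + Q₂⁻¹Q₁⁻¹ρ̃₁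 + Q₂⁻¹ρ̃₂. -/
open Matrix

lemma mcs_step {m : ℕ} (Z Q : Matrix (Fin m) (Fin m) ℝ) (θ : ℝ) (hQ : Q = 1 - θ • Z)
    (hu : IsUnit Q) (u us x xs y ys b c ρ : Fin m → ℝ)
    (hx : x = y + θ • (Z.mulVec x + c - Z.mulVec u - b))
    (hxs : xs = ys + θ • (Z.mulVec xs + c - Z.mulVec us - b) + ρ) :
    (xs - x) - (us - u) = Q⁻¹.mulVec ((ys - y) - (us - u) + ρ) := by
  have hdet : IsUnit Q.det := (Matrix.isUnit_iff_isUnit_det Q).1 hu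
  have h : (ys - y) - (us - u) + ρ = Q.mulVec ((xs - x) - (us - u)) := by
    rw [hQ]
    simp only [Matrix.sub_mulVec, Matrix.one_mulVec, Matrix.smul_mulVec, Matrix.mulVec_sub]
    ext i
    have h1 := congrFun hx i
    have h2 := congrFun hxs i
    simp only [Pi.add_apply, Pi.sub_apply, Pi.smul_apply, smul_eq_mul] at h1 h2 ⊢
    linarith
  rw [h, Matrix.mulVec_mulVec, Matrix.nonsing_inv_mul _ hdet, Matrix.one_mulVec]

/-- Error recursion of the Modified Craig–Sneyd scheme with `k = 2`
(eqs. (2.7)–(2.9) of the paper): one step of the MCS scheme applied to the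
linear system `U' = AU + g(t)` with splitting `A = A₀ + A₁ + A₂`, together with
its perturbed version, satisfies `v* − v = R(u* − u) + d` where `R` is the MCS
stability matrix and `d` collects the perturbations. -/
theorem stmt_18 (m : ℕ) (A₀ A₁ A₂ : Matrix (Fin m) (Fin m) ℝ) (Δt θ : ℝ)
    (hΔt : 0 < Δt)
    (Z₀ Z₁ Z₂ Z Q₁ Q₂ P : Matrix (Fin m) (Fin m) ℝ)
    (hZ₀ : Z₀ = Δt • A₀) (hZ₁ : Z₁ = Δt • A₁) (hZ₂ : Z₂ = Δt • A₂)
    (hZ : Z = Z₀ + Z₁ + Z₂)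
    (hQ₁ : Q₁ = 1 - θ • Z₁) (hQ₂ : Q₂ = 1 - θ • Z₂) (hP : P = Q₁ * Q₂)
    (hQ₁inv : IsUnit Q₁) (hQ₂inv : IsUnit Q₂)
    (u ustar b₀ b₁ b₂ c₀ c₁ c₂ b c : Fin m → ℝ)
    (ρ₀ ρ₁ ρ₂ ρh₀ ρt₀ ρt₁ ρt₂ : Fin m → ℝ)
    (hb : b = b₀ + b₁ + b₂) (hc : c = c₀ + c₁ + c₂)
    (Y₀ Y₁ Y₂ Yh₀ Yt₀ Yt₁ Yt₂ v : Fin m → ℝ)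
    (hY₀ : Y₀ = u + Z.mulVec u + Δt • b)
    (hY₁ : Y₁ = Y₀ + θ • (Z₁.mulVec Y₁ + Δt • c₁ - Z₁.mulVec u - Δt • b₁))
    (hY₂ : Y₂ = Y₁ + θ • (Z₂.mulVec Y₂ + Δt • c₂ - Z₂.mulVec u - Δt • b₂))
    (hYh₀ : Yh₀ = Y₀ + θ • (Z₀.mulVec Y₂ + Δt • c₀ - Z₀.mulVec u - Δt • b₀))
    (hYt₀ : Yt₀ = Yh₀ + (1 / 2 - θ) • (Z.mulVec Y₂ + Δt • c - Z.mulVec u - Δt • b))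
    (hYt₁ : Yt₁ = Yt₀ + θ • (Z₁.mulVec Yt₁ + Δt • c₁ - Z₁.mulVec u - Δt • b₁))
    (hYt₂ : Yt₂ = Yt₁ + θ • (Z₂.mulVec Yt₂ + Δt • c₂ - Z₂.mulVec u - Δt • b₂))
    (hv : v = Yt₂)
    (Ys₀ Ys₁ Ys₂ Ysh₀ Yst₀ Yst₁ Yst₂ vstar : Fin m → ℝ)
    (hYs₀ : Ys₀ = ustar + Z.mulVec ustar + Δt • b + ρ₀)
    (hYs₁ : Ys₁ = Ys₀ + θ • (Z₁.mulVec Ys₁ + Δt • c₁ - Z₁.mulVec ustar - Δt • b₁) + ρ₁)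
    (hYs₂ : Ys₂ = Ys₁ + θ • (Z₂.mulVec Ys₂ + Δt • c₂ - Z₂.mulVec ustar - Δt • b₂) + ρ₂)
    (hYsh₀ : Ysh₀ = Ys₀ + θ • (Z₀.mulVec Ys₂ + Δt • c₀ - Z₀.mulVec ustar - Δt • b₀) + ρh₀)
    (hYst₀ : Yst₀ = Ysh₀
        + (1 / 2 - θ) • (Z.mulVec Ys₂ + Δt • c - Z.mulVec ustar - Δt • b) + ρt₀)
    (hYst₁ : Yst₁ = Yst₀ + θ • (Z₁.mulVec Yst₁ + Δt • c₁ - Z₁.mulVec ustar - Δt • b₁) + ρt₁)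
    (hYst₂ : Yst₂ = Yst₁ + θ • (Z₂.mulVec Yst₂ + Δt • c₂ - Z₂.mulVec ustar - Δt • b₂) + ρt₂)
    (hvstar : vstar = Yst₂)
    (R : Matrix (Fin m) (Fin m) ℝ)
    (hR : R = 1 + P⁻¹ * Z + P⁻¹ * (θ • Z₀ + (1 / 2 - θ) • Z) * P⁻¹ * Z)
    (d : Fin m → ℝ)
    (hd : d = (P⁻¹ * (θ • Z₀ + (1 / 2 - θ) • Z)).mulVec
                (P⁻¹.mulVec ρ₀ + (Q₂⁻¹ * Q₁⁻¹).mulVec ρ₁ + Q₂⁻¹.mulVec ρ₂)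
              + P⁻¹.mulVec (ρ₀ + ρh₀ + ρt₀)
              + (Q₂⁻¹ * Q₁⁻¹).mulVec ρt₁ + Q₂⁻¹.mulVec ρt₂) :
    vstar - v = R.mulVec (ustar - u) + d := by
  have s1 := mcs_step Z₁ Q₁ θ hQ₁ hQ₁inv u ustar Y₁ Ys₁ Y₀ Ys₀ _ _ ρ₁ hY₁ hYs₁
  have s2 := mcs_step Z₂ Q₂ θ hQ₂ hQ₂inv u ustar Y₂ Ys₂ Y₁ Ys₁ _ _ ρ₂ hY₂ hYs₂
  have t1 := mcs_step Z₁ Q₁ θ hQ₁ hQ₁inv u ustar Yt₁ Yst₁ Yt₀ Yst₀ _ _ ρt₁ hYt₁ hYst₁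
  have t2 := mcs_step Z₂ Q₂ θ hQ₂ hQ₂inv u ustar Yt₂ Yst₂ Yt₁ Yst₁ _ _ ρt₂ hYt₂ hYst₂
  have h0 : (Ys₀ - Y₀) - (ustar - u) = Z.mulVec (ustar - u) + ρ₀ := by
    rw [hYs₀, hY₀, Matrix.mulVec_sub]; abel
  have ht0 : (Yst₀ - Yt₀) - (ustar - u) = Z.mulVec (ustar - u) + (ρ₀ + ρh₀ + ρt₀)
      + (θ • Z₀ + (1 / 2 - θ) • Z).mulVec ((Ys₂ - Y₂) - (ustar - u)) := by
    have : (Yst₀ - Yt₀) - (ustar - u) = ((Ys₀ - Y₀) - (ustar - u)) + (ρh₀ + ρt₀)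
      + (θ • Z₀ + (1 / 2 - θ) • Z).mulVec ((Ys₂ - Y₂) - (ustar - u)) := by
      rw [hYst₀, hYt₀, hYsh₀, hYh₀]
      simp only [Matrix.add_mulVec, Matrix.smul_mulVec, Matrix.mulVec_sub]
      ext i
      simp only [Pi.add_apply, Pi.sub_apply, Pi.smul_apply, smul_eq_mul]
      ring
    rw [this, h0]; abel
  have hPi : P⁻¹ = Q₂⁻¹ * Q₁⁻¹ := by rw [hP, Matrix.mul_inv_rev]
  rw [h0] at s1
  rw [s1] at s2
  rw [ht0, s2] at t1
  rw [t1] at t2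
  rw [hvstar, hv, ← sub_add_cancel (Yst₂ - Yt₂) (ustar - u), t2, hR, hd, hPi]
  generalize θ • Z₀ + (1 / 2 - θ) • Z = M
  simp only [Matrix.add_mulVec, Matrix.mulVec_add, Matrix.one_mulVec, Matrix.mulVec_mulVec,
    Matrix.mul_assoc]
  abel
end
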